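/- Functoriality property of the bang modality on the light monoid: for all p, q in M, !(p + q) ≤ F(p) + !q, where for p = (n, m, f) one sets F(p) = (1 + n + m, m, fun x => x³ · f(x³)). -/

import Mathlib

/-- An element of the light monoid: a triple `(n, m, f)` with `f : ℕ → ℕ` monotone. -/
structure LightM where
  n : ℕ
  m : ℕ
  f : ℕ → ℕ
  mono : Monotone f

namespace LightM

/-- Addition: `(n, m, f) + (l, k, g) = (n + l, max m k, pointwise max of f and g)`. -/
def add (p q : LightM) : LightM :=
  ⟨p.n + q.n, max p.m q.m, fun x => max (p.f x) (q.f x), p.mono.max q.mono⟩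

/-- Norm: `‖(n, m, f)‖ = n * f (n + m)`. -/
def norm (p : LightM) : ℕ := p.n * p.f (p.n + p.m)

/-- The zero element `(0, 0, fun _ => 0)`. -/
def zero : LightM := ⟨0, 0, fun _ => 0, monotone_const⟩

/-- The numeral `k`, i.e. the element `(k, 0, fun _ => 0)`. -/
def ofNat (k : ℕ) : LightM := ⟨k, 0, fun _ => 0, monotone_const⟩

/-- Order: `p ≤ q` iff for all `r`, `‖p + r‖ ≤ ‖q + r‖`. -/
def le (p q : LightM) : Prop := ∀ r : LightM, norm (add p r) ≤ norm (add q r)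

/-- Strict order: `p < q` iff for all `r`, `‖p + r‖ < ‖q + r‖`. -/
def lt (p q : LightM) : Prop := ∀ r : LightM, norm (add p r) < norm (add q r)

/-- Paragraph modality: `§(n, m, f) = (n / m, m, fun x => x ^ 2 * f (x ^ 2))`. -/
def para (p : LightM) : LightM :=
  ⟨p.n / p.m, p.m, fun x => x ^ 2 * p.f (x ^ 2),
   fun _ _ h => Nat.mul_le_mul (Nat.pow_le_pow_left h 2) (p.mono (Nat.pow_le_pow_left h 2))⟩

/-- Bang modality: `!(n, m, f) = (1, n + m, fun x => x ^ 3 * f (x ^ 3))`. -/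
def bang (p : LightM) : LightM :=
  ⟨1, p.n + p.m, fun x => x ^ 3 * p.f (x ^ 3),
   fun _ _ h => Nat.mul_le_mul (Nat.pow_le_pow_left h 3) (p.mono (Nat.pow_le_pow_left h 3))⟩

/-- The operation `F(n, m, f) = (1 + n + m, m, fun x => x ^ 3 * f (x ^ 3))`. -/
def Fop (p : LightM) : LightM :=
  ⟨1 + p.n + p.m, p.m, fun x => x ^ 3 * p.f (x ^ 3),
   fun _ _ h => Nat.mul_le_mul (Nat.pow_le_pow_left h 3) (p.mono (Nat.pow_le_pow_left h 3))⟩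

end LightM

open LightM

/-- Functoriality property of the bang modality: `!(p + q) ≤ F(p) + !q`. -/
theorem lightM_bang_functorial (p q : LightM) :
    le (bang (add p q)) (add (Fop p) (bang q)) := by
  intro r
  have hx : (add (bang (add p q)) r).n + (add (bang (add p q)) r).m
      ≤ (add (add (Fop p) (bang q)) r).n + (add (add (Fop p) (bang q)) r).m := by
    simp only [add, bang, Fop]
    omega
  have hn : (add (bang (add p q)) r).n ≤ (add (add (Fop p) (bang q)) r).n := by
    simp only [add, bang, Fop]
    omega
  have hf : (add (bang (add p q)) r).f = (add (add (Fop p) (bang q)) r).f := by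
    funext x
    simp only [add, bang, Fop, Nat.mul_max_mul_left]
  unfold LightM.norm
  rw [hf]
  exact Nat.mul_le_mul hn ((add (add (Fop p) (bang q)) r).mono hx)
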